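/- Let p be a prime, k a field of characteristic p (more generally any commutative ring in which p·1 = 0), and M a k-module. Let T = M^{⊗p} be the p-fold tensor power of M over k (the PiTensorProduct over Fin p), and let σ : T → T be the k-linear automorphism induced by the cyclic permutation of the tensor factors (reindexing along i ↦ i+1 in Fin p). Let W ⊆ T be the k-submodule spanned by all elements σt − t with t ∈ T. Then for all e, f ∈ M, the element (e+f)^{⊗p} − e^{⊗p} − f^{⊗p} lies in W; consequently the map M → T/W sending e to the class of e^{⊗p} is additive (and it satisfies (c·e)^{⊗p} = c^p · e^{⊗p} for c ∈ k, so it is semilinear with respect to the Frobenius of k). -/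

import Mathlib

theorem aux_sum {α Q : Type} [Fintype α] [DecidableEq α] [AddCommGroup Q] (p : ℕ)
    (hp : p.Prime) (hQ : ∀ q : Q, p • q = 0) (f : α → α) (hf : f^[p] = id) (G : α → Q)
    (hG : ∀ a, G (f a) = G a) :
    ∑ a, G a = ∑ a ∈ Finset.univ.filter (fun a => f a = a), G a := by
  classical
  haveI : Fact p.Prime := ⟨hp⟩
  rw [← Finset.sum_fiberwise_of_maps_to (t := Finset.univ.image G) (g := G)
      (fun a _ => Finset.mem_image_of_mem _ (Finset.mem_univ a)) G,
    ← Finset.sum_fiberwise_of_maps_to (s := Finset.univ.filter (fun a => f a = a))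
      (t := Finset.univ.image G) (g := G)
      (fun a _ => Finset.mem_image_of_mem _ (Finset.mem_univ a)) G]
  refine Finset.sum_congr rfl fun q _ => ?_
  have h1 : ∀ s : Finset α, ∑ a ∈ s.filter (fun a => G a = q), G a
      = (s.filter (fun a => G a = q)).card • q := by
    intro s
    rw [← Finset.sum_const]
    exact Finset.sum_congr rfl fun a ha => (Finset.mem_filter.1 ha).2
  rw [h1, h1]
  let F : Function.End {a // G a = q} := fun a => ⟨f a.1, (hG _).trans a.2⟩
  have hF : ∀ n : ℕ, ∀ a, ((F ^ n) a).1 = f^[n] a.1 := by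
    intro n
    induction n with
    | zero => intro a; rfl
    | succ n ih => intro a; rw [pow_succ, Function.iterate_succ_apply]; exact ih (F a)
  have key := Equiv.Perm.card_fixedPoints_modEq (p := p) (n := 1) (f := F) (by
    funext a; apply Subtype.ext; rw [hF]; simp [hf]; rfl)
  have c1 : Fintype.card {a // G a = q} = (Finset.univ.filter (fun a => G a = q)).card :=
    Fintype.card_subtype _
  have c2 : Fintype.card (Function.fixedPoints F)
      = ((Finset.univ.filter (fun a => f a = a)).filter (fun a => G a = q)).card := by
    rw [← Fintype.card_coe]
    refine Fintype.card_congr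
      ⟨fun a => ⟨a.1.1, ?_⟩, fun a => ⟨⟨a.1, ?_⟩, ?_⟩, fun _ => rfl, fun _ => rfl⟩
    · simp only [Finset.mem_filter, Finset.mem_univ, true_and]
      exact ⟨congrArg Subtype.val a.2, a.1.2⟩
    · exact (Finset.mem_filter.1 a.2).2
    · exact Subtype.ext (Finset.mem_filter.1 (Finset.mem_filter.1 a.2).1).2
  rw [c1, c2] at key
  have hm : ∀ n : ℕ, n • q = (n % p) • q := by
    intro n
    conv_lhs => rw [← Nat.mod_add_div n p, add_smul, mul_smul, hQ, add_zero]
  rw [hm, key, ← hm]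

theorem aux_rot (p : ℕ) (hp : p.Prime) (b : Fin p → Bool) (h : b ∘ finRotate p = b) :
    b = (fun _ => true) ∨ b = (fun _ => false) := by
  obtain ⟨n, rfl⟩ : ∃ n, p = n + 1 := ⟨p - 1, by have := hp.pos; omega⟩
  have h0 : ∀ i, b i = b 0 := by
    intro i
    induction i using Fin.induction with
    | zero => rfl
    | succ i ih =>
      have := congrFun h i.castSucc
      simp only [Function.comp, finRotate_succ_apply, Fin.coeSucc_eq_succ] at this
      rw [this, ih]
  cases hb : b 0
  · right; funext i; rw [h0, hb]
  · left; funext i; rw [h0, hb]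

theorem aux_pow (p : ℕ) (hp : p.Prime) : (finRotate p) ^ p = 1 := by
  obtain ⟨n, rfl⟩ : ∃ n, p = n + 2 := ⟨p - 2, by have := hp.two_le; omega⟩
  have h := (isCycle_finRotate (n := n)).orderOf
  rw [support_finRotate, Finset.card_univ, Fintype.card_fin] at h
  exact orderOf_dvd_iff_pow_eq_one.1 (dvd_of_eq h)

/-- Additivity and semilinearity of the map `C : M → (M^{⊗p})_σ`, `e ↦ e^{⊗p}`, used
in the non-commutative Cartier isomorphism: over a commutative ring `k` with
`p · 1 = 0`, if `σ` is the cyclic permutation of the `p`-fold tensor power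
`T = M^{⊗p}` and `W ⊆ T` is the `k`-submodule spanned by the elements `σ t - t`,
then `(e + f)^{⊗p} - e^{⊗p} - f^{⊗p} ∈ W` for all `e, f ∈ M`; consequently
`e ↦ [e^{⊗p}] ∈ T/W` is additive, and it satisfies `(c • e)^{⊗p} = c^p • e^{⊗p}`. -/
theorem stmt_11 (p : ℕ) (hp : p.Prime) (k : Type) [CommRing k] (hpk : (p : k) = 0)
    (M : Type) [AddCommGroup M] [Module k M]
    (σ : PiTensorProduct k (fun _ : Fin p => M) →ₗ[k]
      PiTensorProduct k (fun _ : Fin p => M))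
    (hσ : ∀ m : Fin p → M,
      σ (PiTensorProduct.tprod k m) = PiTensorProduct.tprod k (m ∘ finRotate p)) :
    (∀ e f : M,
      PiTensorProduct.tprod k (fun _ : Fin p => e + f)
          - PiTensorProduct.tprod k (fun _ : Fin p => e)
          - PiTensorProduct.tprod k (fun _ : Fin p => f)
        ∈ Submodule.span k {x | ∃ t, x = σ t - t}) ∧
    (∀ e f : M,
      (Submodule.Quotient.mk (PiTensorProduct.tprod k (fun _ : Fin p => e + f)) :
          PiTensorProduct k (fun _ : Fin p => M) ⧸
            Submodule.span k {x | ∃ t, x = σ t - t})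
        = Submodule.Quotient.mk (PiTensorProduct.tprod k (fun _ : Fin p => e))
          + Submodule.Quotient.mk (PiTensorProduct.tprod k (fun _ : Fin p => f))) ∧
    (∀ (c : k) (e : M),
      (Submodule.Quotient.mk (PiTensorProduct.tprod k (fun _ : Fin p => c • e)) :
          PiTensorProduct k (fun _ : Fin p => M) ⧸
            Submodule.span k {x | ∃ t, x = σ t - t})
        = c ^ p • Submodule.Quotient.mk
            (PiTensorProduct.tprod k (fun _ : Fin p => e))) := by
  have H : ∀ e f : M,
      (Submodule.Quotient.mk (PiTensorProduct.tprod k (fun _ : Fin p => e + f)) :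
          PiTensorProduct k (fun _ : Fin p => M) ⧸
            Submodule.span k {x | ∃ t, x = σ t - t})
        = Submodule.Quotient.mk (PiTensorProduct.tprod k (fun _ : Fin p => e))
          + Submodule.Quotient.mk (PiTensorProduct.tprod k (fun _ : Fin p => f)) := by
    intro e f
    have hexp : PiTensorProduct.tprod k (fun _ : Fin p => e + f)
        = ∑ b : Fin p → Bool, PiTensorProduct.tprod k (fun i => if b i then e else f) := by
      have := MultilinearMap.map_sum (PiTensorProduct.tprod k (s := fun _ : Fin p => M))
        (fun (_ : Fin p) (c : Bool) => if c then e else f)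
      simpa using this
    rw [hexp, ← Submodule.mkQ_apply, map_sum]
    rw [aux_sum p hp (fun q => by rw [← Nat.cast_smul_eq_nsmul k, hpk, zero_smul])
      (fun b : Fin p → Bool => b ∘ finRotate p) ?_ _ ?_]
    · have hS : Finset.univ.filter (fun b : Fin p → Bool => b ∘ finRotate p = b)
          = {(fun _ => true), (fun _ => false)} := by
        ext b
        simp only [Finset.mem_filter, Finset.mem_univ, true_and, Finset.mem_insert,
          Finset.mem_singleton]
        refine ⟨aux_rot p hp b, ?_⟩
        rintro (rfl | rfl) <;> rfl
      rw [hS, Finset.sum_pair]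
      · simp
      · intro h
        simpa using congrFun h ⟨0, hp.pos⟩
    · have hit : ∀ n : ℕ, ∀ b : Fin p → Bool,
          (fun b : Fin p → Bool => b ∘ finRotate p)^[n] b = b ∘ ((finRotate p) ^ n) := by
        intro n
        induction n with
        | zero => intro b; rfl
        | succ n ih =>
          intro b
          rw [Function.iterate_succ_apply, ih, pow_succ']
          rfl
      funext b
      rw [hit, aux_pow p hp]
      rfl
    · intro b
      rw [← sub_eq_zero, ← map_sub, Submodule.mkQ_apply, Submodule.Quotient.mk_eq_zero]
      refine Submodule.subset_span
        ⟨PiTensorProduct.tprod k (fun i => if b i then e else f), ?_⟩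
      rw [hσ]
      rfl
  refine ⟨fun e f => ?_, H, fun c e => ?_⟩
  · rw [← Submodule.Quotient.mk_eq_zero, Submodule.Quotient.mk_sub, Submodule.Quotient.mk_sub,
      H e f]
    abel
  · rw [← Submodule.Quotient.mk_smul]
    congr 1
    have := MultilinearMap.map_smul_univ (PiTensorProduct.tprod k (s := fun _ : Fin p => M))
      (fun _ => c) (fun _ => e)
    simpa using this
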